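/- arXiv:2103.04177 — 3 statements merged into one kernel-verified Lean document; each statement's English description precedes it below -/
import Mathlib

section
/- Let k be a real number with k ≥ 2 and let x ≥ 0 be real. Then e^x − 1 − x ≥ x^k / Γ(k+1), where Γ denotes the Gamma function. -/
/-!
On `t > x` the integrand `exp (-t) * t ^ k` of `Γ(k + 1)` is at least `exp (-t) * x ^ k`, so
integrating over `t > x` gives `exp (-x) * x ^ k ≤ Γ(k + 1)`, that is `x ^ k / Γ(k + 1) ≤ exp x`.
The derivative of `x ^ k / Γ(k + 1)` is `x ^ (k - 1) / Γ(k)`, and the derivative of `exp` minus a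
Taylor polynomial is `exp` minus the Taylor polynomial of one degree less. Each integration from `0`
therefore trades one unit of `k` for one more Taylor term.
-/

open MeasureTheory Set
open scoped Nat

lemma setIntegral_Ioi_exp_neg_mul_rpow_le_Gamma {s x : ℝ} (hs : 0 < s) (hx : 0 ≤ x) :
    ∫ t in Ioi x, Real.exp (-t) * t ^ (s - 1) ≤ Real.Gamma s := by
  rw [Real.Gamma_eq_integral hs]
  refine setIntegral_mono_set (Real.GammaIntegral_convergent hs) ?_
    (Ioi_subset_Ioi hx).eventuallyLE
  filter_upwards [ae_restrict_mem measurableSet_Ioi] with t ht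
  exact mul_nonneg (Real.exp_nonneg _) (Real.rpow_nonneg (le_of_lt ht) _)

lemma exp_neg_mul_rpow_le_setIntegral_Ioi {s x : ℝ} (hs : 0 ≤ s) (hx : 0 ≤ x) :
    Real.exp (-x) * x ^ s ≤ ∫ t in Ioi x, Real.exp (-t) * t ^ s := by
  have integrable_const : IntegrableOn (fun t ↦ Real.exp (-t) * x ^ s) (Ioi x) :=
    (integrableOn_exp_neg_Ioi x).mul_const _
  have integrable_rpow : IntegrableOn (fun t ↦ Real.exp (-t) * t ^ s) (Ioi x) := by
    simpa only [add_sub_cancel_right] using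
      (Real.GammaIntegral_convergent (add_pos_of_nonneg_of_pos hs one_pos)).mono_set
        (Ioi_subset_Ioi hx)
  calc Real.exp (-x) * x ^ s
      = ∫ t in Ioi x, Real.exp (-t) * x ^ s := by
        rw [integral_mul_const, integral_exp_neg_Ioi]
    _ ≤ ∫ t in Ioi x, Real.exp (-t) * t ^ s := by
        refine setIntegral_mono_on integrable_const integrable_rpow measurableSet_Ioi fun t ht ↦ ?_
        have hxt : x ≤ t := le_of_lt ht
        gcongr

lemma rpow_div_Gamma_add_one_le_exp {s x : ℝ} (hs : 0 ≤ s) (hx : 0 ≤ x) :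
    x ^ s / Real.Gamma (s + 1) ≤ Real.exp x := by
  have hs' : 0 < s + 1 := by positivity
  have key : Real.exp (-x) * x ^ s ≤ Real.Gamma (s + 1) :=
    (exp_neg_mul_rpow_le_setIntegral_Ioi hs hx).trans <| by
      simpa only [add_sub_cancel_right] using setIntegral_Ioi_exp_neg_mul_rpow_le_Gamma hs' hx
  rwa [div_le_iff₀ (Real.Gamma_pos_of_pos hs'), ← inv_mul_le_iff₀ (Real.exp_pos x),
    ← Real.exp_neg]

lemma hasDerivAt_rpow_div_Gamma_add_one {s x : ℝ} (hs : s ≠ 0) (h : x ≠ 0 ∨ 1 ≤ s) :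
    HasDerivAt (fun y ↦ y ^ s / Real.Gamma (s + 1)) (x ^ (s - 1) / Real.Gamma s) x := by
  refine ((Real.hasDerivAt_rpow_const h).div_const _).congr_deriv ?_
  rw [Real.Gamma_add_one hs, mul_div_mul_left _ _ hs]

lemma hasDerivAt_sum_range_succ_pow_div_factorial {𝕜 : Type*} [NontriviallyNormedField 𝕜]
    [CharZero 𝕜] (n : ℕ) (x : 𝕜) :
    HasDerivAt (fun y ↦ ∑ i ∈ Finset.range (n + 1), y ^ i / (i ! : 𝕜))
      (∑ i ∈ Finset.range n, x ^ i / (i ! : 𝕜)) x := by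
  have hasDerivAt_term (i : ℕ) :
      HasDerivAt (fun y : 𝕜 ↦ y ^ (i + 1) / ((i + 1)! : 𝕜)) (x ^ i / (i ! : 𝕜)) x := by
    refine ((hasDerivAt_pow (i + 1) x).div_const _).congr_deriv ?_
    rw [Nat.factorial_succ, Nat.cast_mul, Nat.add_sub_cancel,
      mul_div_mul_left _ _ (Nat.cast_ne_zero.2 i.succ_ne_zero)]
  simp only [Finset.sum_range_succ', pow_zero]
  exact (HasDerivAt.fun_sum fun i _ ↦ hasDerivAt_term i).add_const _

theorem exp_sub_one_sub_ge_rpow_div_gamma_general (n : ℕ) {k x : ℝ} (hk : n ≤ k) (hx : 0 ≤ x) :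
    x ^ k / Real.Gamma (k + 1) ≤ Real.exp x - ∑ i ∈ Finset.range n, x ^ i / (i ! : ℝ) := by
  induction n generalizing k x with
  | zero => simpa using rpow_div_Gamma_add_one_le_exp (by simpa using hk) hx
  | succ n ih =>
    rw [Nat.cast_succ] at hk
    have one_le_k : 1 ≤ k := le_trans (by simp) hk
    have k_ne_zero : k ≠ 0 := (one_pos.trans_le one_le_k).ne'
    have deriv_left (y : ℝ) := hasDerivAt_rpow_div_Gamma_add_one (x := y) k_ne_zero (.inr one_le_k)
    have deriv_right (y : ℝ) :=
      (Real.hasDerivAt_exp y).sub (hasDerivAt_sum_range_succ_pow_div_factorial n y)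
    refine image_le_of_deriv_right_le_deriv_boundary
      (fun y _ ↦ (deriv_left y).continuousAt.continuousWithinAt)
      (fun y _ ↦ (deriv_left y).hasDerivWithinAt) ?_
      (fun y _ ↦ (deriv_right y).continuousAt.continuousWithinAt)
      (fun y _ ↦ (deriv_right y).hasDerivWithinAt) (fun y hy ↦ ?_) (right_mem_Icc.2 hx)
    · simp [Finset.sum_range_succ', Real.zero_rpow k_ne_zero]
    · simpa only [sub_add_cancel] using ih (le_sub_iff_add_le.2 hk) hy.1

/-- For real `k ≥ 2` and real `x ≥ 0`, `e^x - 1 - x ≥ x^k / Γ(k+1)`. -/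
theorem exp_sub_one_sub_ge_rpow_div_gamma (k x : ℝ) (hk : 2 ≤ k) (hx : 0 ≤ x) :
    x ^ k / Real.Gamma (k + 1) ≤ Real.exp x - 1 - x := by
  simpa [Finset.sum_range_succ, sub_sub] using
    exp_sub_one_sub_ge_rpow_div_gamma_general 2 hk hx
end

section
/- Under the stated conditions, for every real k ≥ 2 one has ∫ |log(p/p₀)|^k dP₀ ≤ 2^{k−1} Γ(k+1) (2 + M) · h(p,p₀)², where Γ denotes the Gamma function. -/
open MeasureTheory Real ENNReal

/-!
Write `r = √(p₀ / p)` and `φ t = exp |t| - 1 - |t|`. The `k`-th moment of `log (p / p₀) = -2 log r`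
is controlled by the Bernstein norm of `log r`, because `|t| ^ k ≤ Γ (k + 1) φ t` for every real
`k ≥ 2`. For integer `k` this is one term of the exponential series. In general it holds because
`t ^ k / Γ (k + 1)` is at most the sum of the two terms with exponents `⌊k⌋` and `⌊k⌋ + 1`.

It remains to compare `2 ∫ φ (log r) dP₀` with `∫ (1 - r⁻¹)² dP₀ ≤ h²`. Where `r` is below the
threshold `a = 1 + 1 / (2 c)` this is pointwise: `φ (log r) ≤ (1 - r⁻¹)²`. Above it,
`2 r (1 - r⁻¹) ≤ M (1 - r⁻¹)² + r² / M` leaves the surplus `∫ r² / M dP₀`. The hypothesis on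
`∫ p₀ / p dP₀` bounds it by `1 / c` times the mass of the region, which is exactly what is gained
from `log r ≥ log a` there.
-/

section Gamma

variable {s θ x : ℝ}

lemma Gamma_add_one_mul_rpow_le (hsθ : 0 < s + θ) (hθ₀ : 0 ≤ θ) (hθ₁ : θ ≤ 1) :
    Gamma (s + 1) * (s + θ) ^ θ ≤ Gamma (s + θ + 1) := by
  have hΓ : 0 < Gamma (s + θ) := Gamma_pos_of_pos hsθ
  have hΓ' : 0 < Gamma (s + 1) := Gamma_pos_of_pos (by linarith)
  have hconv := convexOn_log_Gamma.right (Set.mem_Ioi.2 hsθ)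
    (show s + θ + 1 ∈ Set.Ioi 0 from Set.mem_Ioi.2 (by linarith)) hθ₀ (sub_nonneg.2 hθ₁) (by ring)
  have hmid : θ * (s + θ) + (1 - θ) * (s + θ + 1) = s + 1 := by ring
  simp only [Function.comp_apply, smul_eq_mul, hmid] at hconv
  rw [Gamma_add_one hsθ.ne', log_mul hsθ.ne' hΓ.ne'] at hconv
  rw [Gamma_add_one hsθ.ne', ← log_le_log_iff (by positivity) (by positivity),
    log_mul hΓ'.ne' (by positivity), log_rpow hsθ, log_mul hsθ.ne' hΓ.ne']
  linarith

lemma rpow_le_rpow_mul_one_add_div (hs : 0 < s) (hθ₀ : 0 ≤ θ) (hθ₁ : θ ≤ 1) (hx : 0 ≤ x) :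
    x ^ θ ≤ (s + θ) ^ θ * (1 + x / (s + 1)) := by
  have hsθ : 0 < s + θ := by linarith
  have hbernoulli : (x / (s + θ)) ^ θ ≤ 1 + θ * (x / (s + θ) - 1) := by
    have hquot : 0 ≤ x / (s + θ) := by positivity
    simpa only [add_sub_cancel] using
      rpow_one_add_le_one_add_mul_self (s := x / (s + θ) - 1) (by linarith) hθ₀ hθ₁
  have hslope : θ / (s + θ) ≤ 1 / (s + 1) := by
    rw [div_le_div_iff₀ hsθ (by linarith)]
    nlinarith
  calc x ^ θ = (s + θ) ^ θ * (x / (s + θ)) ^ θ := by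
        rw [← mul_rpow hsθ.le (by positivity), mul_div_cancel₀ x hsθ.ne']
    _ ≤ (s + θ) ^ θ * (1 + x / (s + 1)) := by
        gcongr
        calc (x / (s + θ)) ^ θ ≤ 1 - θ + θ / (s + θ) * x := hbernoulli.trans_eq (by ring)
          _ ≤ 1 + 1 / (s + 1) * x := by gcongr; linarith
          _ = 1 + x / (s + 1) := by ring

lemma rpow_add_le_Gamma_mul (hs : 0 < s) (hθ₀ : 0 ≤ θ) (hθ₁ : θ ≤ 1) (hx : 0 ≤ x) :
    x ^ (s + θ) ≤
      Gamma (s + θ + 1) * (x ^ s / Gamma (s + 1) + x ^ (s + 1) / Gamma (s + 1 + 1)) := by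
  have : 0 < Gamma (s + 1) := Gamma_pos_of_pos (by linarith)
  have hsum : x ^ s / Gamma (s + 1) + x ^ (s + 1) / Gamma (s + 1 + 1) =
      x ^ s / Gamma (s + 1) * (1 + x / (s + 1)) := by
    rw [Gamma_add_one (s := s + 1) (by linarith), rpow_add_one' hx (by linarith)]
    field_simp
  rw [hsum]
  calc x ^ (s + θ) = x ^ s * x ^ θ := rpow_add_of_nonneg hx hs.le hθ₀
    _ ≤ x ^ s * ((s + θ) ^ θ * (1 + x / (s + 1))) := by
        gcongr
        exact rpow_le_rpow_mul_one_add_div hs hθ₀ hθ₁ hx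
    _ = Gamma (s + 1) * (s + θ) ^ θ * (x ^ s / Gamma (s + 1) * (1 + x / (s + 1))) := by
        field_simp
    _ ≤ Gamma (s + θ + 1) * (x ^ s / Gamma (s + 1) * (1 + x / (s + 1))) := by
        gcongr
        exact Gamma_add_one_mul_rpow_le (by linarith) hθ₀ hθ₁

lemma pow_div_factorial_add_le_exp_sub_one_sub {n : ℕ} (hn : 2 ≤ n) (hx : 0 ≤ x) :
    x ^ n / n.factorial + x ^ (n + 1) / (n + 1).factorial ≤ exp x - 1 - x := by
  have hexp := sum_le_exp_of_nonneg hx (n + 2)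
  rw [Finset.sum_range_succ, Finset.sum_range_succ] at hexp
  have hlow : ∑ i ∈ Finset.range 2, x ^ i / (i.factorial : ℝ) ≤
      ∑ i ∈ Finset.range n, x ^ i / (i.factorial : ℝ) :=
    Finset.sum_le_sum_of_subset_of_nonneg (Finset.range_mono hn) fun i _ _ => by positivity
  norm_num [Finset.sum_range_succ] at hlow
  linarith

lemma rpow_le_Gamma_mul_exp_sub_one_sub {k : ℝ} (hk : 2 ≤ k) (hx : 0 ≤ x) :
    x ^ k ≤ Gamma (k + 1) * (exp x - 1 - x) := by
  have hk₀ : 0 ≤ k := by linarith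
  have hfloor : 2 ≤ ⌊k⌋₊ := Nat.le_floor (mod_cast hk)
  have hsplit := rpow_add_le_Gamma_mul (s := ⌊k⌋₊) (θ := k - ⌊k⌋₊) (by positivity)
    (by linarith [Nat.floor_le hk₀]) (by linarith [Nat.lt_floor_add_one k]) hx
  have hcast : ((⌊k⌋₊ : ℝ) + 1) = (⌊k⌋₊ + 1 : ℕ) := by push_cast; rfl
  rw [add_sub_cancel, hcast, Gamma_nat_eq_factorial, ← hcast, Gamma_nat_eq_factorial, hcast,
    Real.rpow_natCast, Real.rpow_natCast] at hsplit
  exact hsplit.trans (mul_le_mul_of_nonneg_left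
    (pow_div_factorial_add_le_exp_sub_one_sub hfloor hx) (Gamma_pos_of_pos (by linarith)).le)

end Gamma

/-- The function `φ` defining the Bernstein norm, `‖f‖_{P,B}² = 2 ∫ φ(f) dP`. -/
noncomputable def bernsteinFun (t : ℝ) : ℝ := exp |t| - 1 - |t|

section BernsteinFun

variable {r a : ℝ}

lemma bernsteinFun_nonneg (t : ℝ) : 0 ≤ bernsteinFun t := by
  unfold bernsteinFun
  linarith [add_one_le_exp |t|]

lemma bernsteinFun_log_of_one_le (hr : 1 ≤ r) : bernsteinFun (log r) = r - 1 - log r := by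
  rw [bernsteinFun, abs_of_nonneg (log_nonneg hr), exp_log (by linarith)]

lemma bernsteinFun_log_of_le_one (hr₀ : 0 < r) (hr : r ≤ 1) :
    bernsteinFun (log r) = r⁻¹ - 1 + log r := by
  rw [bernsteinFun, abs_of_nonpos (log_nonpos hr₀.le hr), exp_neg, exp_log hr₀, sub_neg_eq_add]

lemma sub_one_sub_log_le_one_sub_inv_sq (hr : 1 ≤ r) (hr₂ : r ^ 2 ≤ r + 1) :
    r - 1 - log r ≤ (1 - r⁻¹) ^ 2 := by
  have hlog : 2 * (r - 1) / (r + 1) ≤ log r := by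
    have h := le_log_one_add_of_nonneg (x := r - 1) (by linarith)
    rwa [add_sub_cancel, show r - 1 + 2 = r + 1 by ring] at h
  calc r - 1 - log r ≤ r - 1 - 2 * (r - 1) / (r + 1) := by gcongr
    _ = (r - 1) ^ 2 / (r + 1) := by field_simp; ring
    -- This step limits `r` to the golden ratio, the positive root of `r ^ 2 = r + 1`.
    _ ≤ (r - 1) ^ 2 / r ^ 2 := by gcongr
    _ = (1 - r⁻¹) ^ 2 := by rw [← div_pow, sub_div, div_self (by linarith), one_div]

lemma bernsteinFun_log_le_one_sub_inv_sq (hr₀ : 0 < r) (hr₂ : r ^ 2 ≤ r + 1) :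
    bernsteinFun (log r) ≤ (1 - r⁻¹) ^ 2 := by
  rcases le_total 1 r with hr | hr
  · rw [bernsteinFun_log_of_one_le hr]
    exact sub_one_sub_log_le_one_sub_inv_sq hr hr₂
  · rw [bernsteinFun_log_of_le_one hr₀ hr]
    calc r⁻¹ - 1 + log r ≤ r⁻¹ - 1 + (r - 1) := by gcongr; exact log_le_sub_one_of_pos hr₀
      _ = r * (1 - r⁻¹) ^ 2 := by field_simp; ring
      _ ≤ (1 - r⁻¹) ^ 2 := mul_le_of_le_one_left (sq_nonneg _) hr

lemma one_sub_inv_sq_le_one_sub_inv_sq (ha : 1 ≤ a) (har : a ≤ r) :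
    (1 - a⁻¹) ^ 2 ≤ (1 - r⁻¹) ^ 2 := by
  have hinv : a⁻¹ ≤ 1 := inv_le_one_of_one_le₀ ha
  have hanti : r⁻¹ ≤ a⁻¹ := by gcongr
  exact pow_le_pow_left₀ (by linarith) (by linarith) 2

lemma two_mul_bernsteinFun_log_add_le {M : ℝ} (hM : 0 < M) (ha : 1 ≤ a) (ha₂ : a ^ 2 ≤ a + 1)
    (har : a ≤ r) :
    2 * bernsteinFun (log r) + 2 * (a - 1) ≤ (2 + M) * (1 - r⁻¹) ^ 2 + M⁻¹ * r ^ 2 := by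
  have hr₀ : 0 < r := by linarith
  have hgain : a - 1 - log r ≤ (1 - r⁻¹) ^ 2 :=
    calc a - 1 - log r ≤ a - 1 - log a := by gcongr
      _ ≤ (1 - a⁻¹) ^ 2 := sub_one_sub_log_le_one_sub_inv_sq ha ha₂
      _ ≤ (1 - r⁻¹) ^ 2 := one_sub_inv_sq_le_one_sub_inv_sq ha har
  have hyoung : 2 * (r - 1) ≤ M * (1 - r⁻¹) ^ 2 + M⁻¹ * r ^ 2 := by
    have hsquare : M * (1 - r⁻¹) ^ 2 + M⁻¹ * r ^ 2 - 2 * (r - 1) =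
        (M * (1 - r⁻¹) - r) ^ 2 / M := by field_simp; ring
    have hnonneg : 0 ≤ (M * (1 - r⁻¹) - r) ^ 2 / M := by positivity
    linarith
  rw [bernsteinFun_log_of_one_le (ha.trans har)]
  linarith

end BernsteinFun

/-- The squared Bernstein norm `‖f‖_{P,B}²`, with values in `ℝ≥0∞` so that it is meaningful without
any integrability assumption on `f`. -/
noncomputable def bernsteinNormSq {X : Type*} [MeasurableSpace X] (P : Measure X) (f : X → ℝ) :
    ℝ≥0∞ :=
  2 * ∫⁻ x, ENNReal.ofReal (bernsteinFun (f x)) ∂P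

section BernsteinNormSq

variable {X : Type*} [MeasurableSpace X] {P : Measure X}

lemma bernsteinNormSq_eq_lintegral (f : X → ℝ) :
    bernsteinNormSq P f = ∫⁻ x, ENNReal.ofReal (2 * bernsteinFun (f x)) ∂P := by
  simp only [bernsteinNormSq, ENNReal.ofReal_mul zero_le_two, ENNReal.ofReal_ofNat]
  rw [lintegral_const_mul' _ _ ENNReal.ofNat_ne_top]

lemma bernsteinNormSq_restrict_add_compl (f : X → ℝ) {A : Set X} (hA : MeasurableSet A) :
    bernsteinNormSq (P.restrict A) f + bernsteinNormSq (P.restrict Aᶜ) f =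
      bernsteinNormSq P f := by
  simp only [bernsteinNormSq, ← mul_add, lintegral_add_compl _ hA]

lemma lintegral_abs_rpow_le_bernsteinNormSq (f : X → ℝ) {k : ℝ} (hk : 2 ≤ k) :
    ∫⁻ x, ENNReal.ofReal (|f x| ^ k) ∂P ≤
      ENNReal.ofReal (Gamma (k + 1) / 2) * bernsteinNormSq P f := by
  have hΓ : 0 ≤ Gamma (k + 1) / 2 := by linarith [Gamma_pos_of_pos (show 0 < k + 1 by linarith)]
  rw [bernsteinNormSq_eq_lintegral, ← lintegral_const_mul' _ _ ENNReal.ofReal_ne_top]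
  refine lintegral_mono fun x => ?_
  rw [← ENNReal.ofReal_mul hΓ]
  refine ENNReal.ofReal_le_ofReal
    ((rpow_le_Gamma_mul_exp_sub_one_sub hk (abs_nonneg (f x))).trans_eq ?_)
  rw [bernsteinFun]
  ring

variable {r : X → ℝ} {a M : ℝ}

lemma bernsteinNormSq_log_le_of_sq_le_add_one (hr : ∀ᵐ x ∂P, 0 < r x ∧ r x ^ 2 ≤ r x + 1) :
    bernsteinNormSq P (fun x => log (r x)) ≤
      2 * ∫⁻ x, ENNReal.ofReal ((1 - (r x)⁻¹) ^ 2) ∂P := by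
  refine mul_le_mul_right (lintegral_mono_ae ?_) 2
  filter_upwards [hr] with x ⟨hpos, hsq⟩
  exact ENNReal.ofReal_le_ofReal (bernsteinFun_log_le_one_sub_inv_sq hpos hsq)

lemma lintegral_one_sub_inv_sq_eq_top (ha : 1 < a) (har : ∀ᵐ x ∂P, a ≤ r x)
    (hP : P Set.univ = ∞) : ∫⁻ x, ENNReal.ofReal ((1 - (r x)⁻¹) ^ 2) ∂P = ∞ := by
  have hconst : 0 < (1 - a⁻¹) ^ 2 := pow_pos (sub_pos.2 (inv_lt_one_of_one_lt₀ ha)) 2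
  refine top_le_iff.1 ?_
  calc ∞ = ∫⁻ _, ENNReal.ofReal ((1 - a⁻¹) ^ 2) ∂P := by
        rw [lintegral_const, hP, ENNReal.mul_top (ENNReal.ofReal_pos.2 hconst).ne']
    _ ≤ ∫⁻ x, ENNReal.ofReal ((1 - (r x)⁻¹) ^ 2) ∂P := by
        refine lintegral_mono_ae (har.mono fun x hx => ENNReal.ofReal_le_ofReal ?_)
        exact one_sub_inv_sq_le_one_sub_inv_sq ha.le hx

lemma measure_univ_le_lintegral_sq (hr : ∀ᵐ x ∂P, 1 ≤ r x) :
    P Set.univ ≤ ∫⁻ x, ENNReal.ofReal (r x ^ 2) ∂P := by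
  rw [← lintegral_one]
  exact lintegral_mono_ae (hr.mono fun x hx => ENNReal.one_le_ofReal.2 (one_le_pow₀ hx))

lemma bernsteinNormSq_log_add_le (hrm : AEMeasurable r P) (hM : 0 < M) (ha : 1 ≤ a)
    (ha₂ : a ^ 2 ≤ a + 1) (har : ∀ᵐ x ∂P, a ≤ r x) :
    bernsteinNormSq P (fun x => log (r x)) + ENNReal.ofReal (2 * (a - 1)) * P Set.univ ≤
      ENNReal.ofReal (2 + M) * ∫⁻ x, ENNReal.ofReal ((1 - (r x)⁻¹) ^ 2) ∂P +
        ENNReal.ofReal M⁻¹ * ∫⁻ x, ENNReal.ofReal (r x ^ 2) ∂P := by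
  rw [bernsteinNormSq_eq_lintegral, ← lintegral_const, ← lintegral_add_right _ measurable_const,
    ← lintegral_const_mul' _ _ ENNReal.ofReal_ne_top,
    ← lintegral_const_mul' _ _ ENNReal.ofReal_ne_top, ← lintegral_add_left' (by fun_prop)]
  refine lintegral_mono_ae (har.mono fun x hx => ?_)
  have hφ := bernsteinFun_nonneg (log (r x))
  rw [← ENNReal.ofReal_add (by positivity) (by linarith), ← ENNReal.ofReal_mul (by positivity),
    ← ENNReal.ofReal_mul (by positivity), ← ENNReal.ofReal_add (by positivity) (by positivity)]
  exact ENNReal.ofReal_le_ofReal (two_mul_bernsteinFun_log_add_le hM ha ha₂ hx)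

lemma bernsteinNormSq_log_le_of_le (hrm : AEMeasurable r P) (hM : 0 ≤ M) (ha : 1 < a)
    (ha₂ : a ^ 2 ≤ a + 1) (har : ∀ᵐ x ∂P, a ≤ r x)
    (hr₂ : ∫⁻ x, ENNReal.ofReal (r x ^ 2) ∂P ≤ ENNReal.ofReal (2 * (a - 1) * M) * P Set.univ) :
    bernsteinNormSq P (fun x => log (r x)) ≤
      ENNReal.ofReal (2 + M) * ∫⁻ x, ENNReal.ofReal ((1 - (r x)⁻¹) ^ 2) ∂P := by
  rcases hM.eq_or_lt with rfl | hM₀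
  · have hP : P Set.univ ≤ 0 := by
      simpa only [mul_zero, ENNReal.ofReal_zero, zero_mul] using
        (measure_univ_le_lintegral_sq (har.mono fun x hx => ha.le.trans hx)).trans hr₂
    rw [Measure.measure_univ_eq_zero.1 (le_zero_iff.1 hP), bernsteinNormSq, lintegral_zero_measure,
      mul_zero]
    exact zero_le
  rcases eq_or_ne (P Set.univ) ∞ with hP | hP
  · rw [lintegral_one_sub_inv_sq_eq_top ha har hP,
      ENNReal.mul_top (ENNReal.ofReal_pos.2 (by linarith)).ne']
    exact le_top
  have hsurplus : ENNReal.ofReal M⁻¹ * ∫⁻ x, ENNReal.ofReal (r x ^ 2) ∂P ≤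
      ENNReal.ofReal (2 * (a - 1)) * P Set.univ := by
    grw [hr₂]
    rw [← mul_assoc, ← ENNReal.ofReal_mul (by positivity), mul_comm M⁻¹,
      mul_inv_cancel_right₀ hM₀.ne']
  have hgain : ENNReal.ofReal (2 * (a - 1)) * P Set.univ ≠ ∞ :=
    ENNReal.mul_ne_top ENNReal.ofReal_ne_top hP
  exact ENNReal.le_of_add_le_add_right hgain <|
    (bernsteinNormSq_log_add_le hrm hM₀ ha.le ha₂ har).trans (by gcongr)

lemma bernsteinNormSq_log_le (hrm : Measurable r) (hr₀ : ∀ᵐ x ∂P, 0 < r x) (hM : 0 ≤ M)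
    (ha : 1 < a) (ha₂ : a ^ 2 ≤ a + 1)
    (hr₂ : ∫⁻ x in {x | a ≤ r x}, ENNReal.ofReal (r x ^ 2) ∂P ≤
      ENNReal.ofReal (2 * (a - 1) * M) * P {x | a ≤ r x}) :
    bernsteinNormSq P (fun x => log (r x)) ≤
      ENNReal.ofReal (2 + M) * ∫⁻ x, ENNReal.ofReal ((1 - (r x)⁻¹) ^ 2) ∂P := by
  have hA : MeasurableSet {x | a ≤ r x} := measurableSet_le measurable_const hrm
  have hbelow : ∀ᵐ x ∂P.restrict {x | a ≤ r x}ᶜ, 0 < r x ∧ r x ^ 2 ≤ r x + 1 := by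
    filter_upwards [ae_restrict_of_ae hr₀, ae_restrict_mem hA.compl] with x hpos hx
    have hlt : r x < a := not_le.1 hx
    exact ⟨hpos, by nlinarith⟩
  rw [← bernsteinNormSq_restrict_add_compl _ hA, ← lintegral_add_compl _ hA, mul_add]
  refine add_le_add ?_ ?_
  · exact bernsteinNormSq_log_le_of_le hrm.aemeasurable hM ha ha₂ (ae_restrict_mem hA)
      (by rwa [Measure.restrict_apply_univ])
  · grw [bernsteinNormSq_log_le_of_sq_le_add_one hbelow]
    gcongr
    rw [← ENNReal.ofReal_ofNat]
    exact ENNReal.ofReal_le_ofReal (by linarith)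

end BernsteinNormSq

lemma setLIntegral_le_ofReal_div_mul {X : Type*} [MeasurableSpace X] {P : Measure X} {c M : ℝ}
    (hc : 0 < c) {A : Set X} {f : X → ℝ≥0∞}
    (h : P A = 0 ∨ ENNReal.ofReal c * ∫⁻ x in A, f x ∂P ≤ ENNReal.ofReal M * P A) :
    ∫⁻ x in A, f x ∂P ≤ ENNReal.ofReal (M / c) * P A := by
  rcases h with hnull | hle
  · rw [setLIntegral_measure_zero _ _ hnull]
    exact zero_le
  · rw [ENNReal.ofReal_div_of_pos hc, ← ENNReal.mul_div_right_comm,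
      ENNReal.le_div_iff_mul_le (.inl (ENNReal.ofReal_pos.2 hc).ne') (.inl ENNReal.ofReal_ne_top),
      mul_comm]
    exact hle

/-- The squared Hellinger distance `h(p,q)²`, for functions that need not be normalized. -/
noncomputable def hellingerSq {X : Type*} [MeasurableSpace X] (μ : Measure X) (p q : X → ℝ) :
    ℝ≥0∞ :=
  ∫⁻ x, ENNReal.ofReal ((√(p x) - √(q x)) ^ 2) ∂μ

section Hellinger

lemma mul_one_sub_inv_sqrt_div_sq {b : ℝ} (hb : 0 < b) (a : ℝ) :
    b * (1 - (√(b / a))⁻¹) ^ 2 = (√a - √b) ^ 2 := by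
  have : 0 < √b := sqrt_pos.2 hb
  rw [sqrt_div hb.le, inv_div]
  nth_rewrite 1 [← sq_sqrt hb.le]
  field_simp
  ring

lemma abs_log_div_eq_two_mul_abs_log_sqrt {a b : ℝ} (h : 0 ≤ b / a) :
    |log (a / b)| = 2 * |log √(b / a)| := by
  rw [log_sqrt h, abs_div, abs_two, mul_div_cancel₀ _ two_ne_zero, ← inv_div, Real.log_inv, abs_neg]

variable {X : Type*} [MeasurableSpace X]

lemma lintegral_abs_log_div_rpow_le_bernsteinNormSq (P : Measure X) {p q : X → ℝ}
    (hpq : ∀ x, 0 ≤ q x / p x) {k : ℝ} (hk : 2 ≤ k) :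
    ∫⁻ x, ENNReal.ofReal (|log (p x / q x)| ^ k) ∂P ≤
      ENNReal.ofReal (2 ^ (k - 1) * Gamma (k + 1)) *
        bernsteinNormSq P (fun x => log √(q x / p x)) := by
  calc ∫⁻ x, ENNReal.ofReal (|log (p x / q x)| ^ k) ∂P
      = ENNReal.ofReal (2 ^ k) * ∫⁻ x, ENNReal.ofReal (|log √(q x / p x)| ^ k) ∂P := by
        rw [← lintegral_const_mul' _ _ ENNReal.ofReal_ne_top]
        simp only [abs_log_div_eq_two_mul_abs_log_sqrt (hpq _),
          mul_rpow zero_le_two (abs_nonneg _), ENNReal.ofReal_mul (rpow_nonneg zero_le_two k)]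
    _ ≤ ENNReal.ofReal (2 ^ k) * (ENNReal.ofReal (Gamma (k + 1) / 2) *
          bernsteinNormSq P (fun x => log √(q x / p x))) := by
        gcongr
        exact lintegral_abs_rpow_le_bernsteinNormSq _ hk
    _ = ENNReal.ofReal (2 ^ (k - 1) * Gamma (k + 1)) *
          bernsteinNormSq P (fun x => log √(q x / p x)) := by
        rw [← mul_assoc, ← ENNReal.ofReal_mul (by positivity), rpow_sub_one two_ne_zero]
        ring_nf

variable {μ : Measure X}

lemma ae_withDensity_ofReal_pos {q : X → ℝ} (hq : Measurable q) :
    ∀ᵐ x ∂μ.withDensity (fun x => ENNReal.ofReal (q x)), 0 < q x := by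
  rw [ae_withDensity_iff hq.ennreal_ofReal]
  exact ae_of_all μ fun x hx => ENNReal.ofReal_pos.1 (pos_iff_ne_zero.2 hx)

lemma lintegral_one_sub_inv_sqrt_div_sq_le_hellingerSq (p : X → ℝ) {q : X → ℝ}
    (hq : Measurable q) :
    ∫⁻ x, ENNReal.ofReal ((1 - (√(q x / p x))⁻¹) ^ 2)
        ∂μ.withDensity (fun x => ENNReal.ofReal (q x)) ≤ hellingerSq μ p q := by
  refine (lintegral_withDensity_le_lintegral_mul μ hq.ennreal_ofReal _).trans
    (lintegral_mono fun x => ?_)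
  rw [Pi.mul_apply]
  rcases le_or_gt (q x) 0 with hqx | hqx
  · rw [ENNReal.ofReal_of_nonpos hqx, zero_mul]
    exact zero_le
  · rw [← ENNReal.ofReal_mul hqx.le, mul_one_sub_inv_sqrt_div_sq hqx]

lemma bernsteinNormSq_log_sqrt_div_le_hellingerSq {p q : X → ℝ} (hp : Measurable p)
    (hq : Measurable q) (hpq : ∀ x, 0 ≤ q x / p x)
    (hp_ne : ∀ᵐ x ∂μ.withDensity (fun x => ENNReal.ofReal (q x)), p x ≠ 0) {a M : ℝ} (hM : 0 ≤ M)
    (ha : 1 < a) (ha₂ : a ^ 2 ≤ a + 1)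
    (htail : ∫⁻ x in {x | a ^ 2 ≤ q x / p x}, ENNReal.ofReal (q x / p x)
        ∂μ.withDensity (fun x => ENNReal.ofReal (q x)) ≤
      ENNReal.ofReal (2 * (a - 1) * M) *
        μ.withDensity (fun x => ENNReal.ofReal (q x)) {x | a ^ 2 ≤ q x / p x}) :
    bernsteinNormSq (μ.withDensity fun x => ENNReal.ofReal (q x)) (fun x => log √(q x / p x)) ≤
      ENNReal.ofReal (2 + M) * hellingerSq μ p q := by
  grw [← lintegral_one_sub_inv_sqrt_div_sq_le_hellingerSq p hq]
  refine bernsteinNormSq_log_le (by fun_prop) ?_ hM ha ha₂ ?_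
  · filter_upwards [hp_ne, ae_withDensity_ofReal_pos hq] with x hpx hqx
    exact sqrt_pos.2 ((hpq x).lt_of_ne' (div_ne_zero hqx.ne' hpx))
  · simpa only [le_sqrt' (zero_lt_one.trans ha), sq_sqrt (hpq _)] using htail

end Hellinger

theorem lintegral_abs_log_ratio_rpow_le_hellinger_general
    {X : Type*} [MeasurableSpace X] (μ : Measure X)
    (p p₀ : X → ℝ) (hp : Measurable p) (hp₀ : Measurable p₀)
    (hpnn : ∀ x, 0 ≤ p x) (hp₀nn : ∀ x, 0 ≤ p₀ x)
    (P₀ : Measure X) (hP₀ : P₀ = μ.withDensity fun x => ENNReal.ofReal (p₀ x))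
    (hzero : P₀ {x | p x = 0} = 0)
    (M : ℝ) (hM : 0 ≤ M)
    (hMbound : ∃ c : ℝ, 1 ≤ c ∧
      (P₀ {x | (1 + 1 / (2 * c)) ^ 2 ≤ p₀ x / p x} = 0 ∨
        ENNReal.ofReal c *
            (∫⁻ x in {x | (1 + 1 / (2 * c)) ^ 2 ≤ p₀ x / p x},
              ENNReal.ofReal (p₀ x / p x) ∂P₀) ≤
          ENNReal.ofReal M * P₀ {x | (1 + 1 / (2 * c)) ^ 2 ≤ p₀ x / p x}))
    (k : ℝ) (hk : 2 ≤ k) :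
    ∫⁻ x, ENNReal.ofReal (|log (p x / p₀ x)| ^ k) ∂P₀ ≤
      ENNReal.ofReal ((2 : ℝ) ^ (k - 1) * Gamma (k + 1) * (2 + M)) * hellingerSq μ p p₀ := by
  obtain ⟨c, hc, htail⟩ := hMbound
  have hpos : 0 < 1 / (2 * c) := by positivity
  have hle : 1 / (2 * c) ≤ 1 / 2 := one_div_le_one_div_of_le two_pos (by linarith)
  have ha : 1 < 1 + 1 / (2 * c) := by linarith
  have ha₂ : (1 + 1 / (2 * c)) ^ 2 ≤ 1 + 1 / (2 * c) + 1 := by nlinarith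
  have hratio (x : X) : 0 ≤ p₀ x / p x := div_nonneg (hp₀nn x) (hpnn x)
  have hK : 0 ≤ 2 ^ (k - 1) * Gamma (k + 1) :=
    mul_nonneg (by positivity) (Gamma_pos_of_pos (by linarith)).le
  have hbernstein : bernsteinNormSq P₀ (fun x => log √(p₀ x / p x)) ≤
      ENNReal.ofReal (2 + M) * hellingerSq μ p p₀ := by
    subst hP₀
    refine bernsteinNormSq_log_sqrt_div_le_hellingerSq hp hp₀ hratio
      (measure_eq_zero_iff_ae_notMem.1 hzero) hM ha ha₂ ?_
    rw [show 2 * (1 + 1 / (2 * c) - 1) * M = M / c by field_simp; ring]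
    exact setLIntegral_le_ofReal_div_mul (by linarith) htail
  rw [ENNReal.ofReal_mul hK, mul_assoc]
  grw [lintegral_abs_log_div_rpow_le_bernsteinNormSq P₀ hratio hk, hbernstein]

/-- Under the stated conditions, for every real `k ≥ 2`,
`∫ |log(p/p₀)|^k dP₀ ≤ 2^{k-1} Γ(k+1) (2 + M) h(p,p₀)²`. -/
theorem lintegral_abs_log_ratio_rpow_le_hellinger
    {X : Type*} [MeasurableSpace X] (μ : Measure X) [SigmaFinite μ]
    (p p₀ : X → ℝ) (hp : Measurable p) (hp₀ : Measurable p₀)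
    (hpnn : ∀ x, 0 ≤ p x) (hp₀nn : ∀ x, 0 ≤ p₀ x)
    (hpden : ∫⁻ x, ENNReal.ofReal (p x) ∂μ = 1)
    (hp₀den : ∫⁻ x, ENNReal.ofReal (p₀ x) ∂μ = 1)
    (P₀ : Measure X) (hP₀ : P₀ = μ.withDensity fun x => ENNReal.ofReal (p₀ x))
    (hzero : P₀ {x | p x = 0} = 0)
    (hfin : ∫⁻ x, ENNReal.ofReal (p₀ x / p x) ∂P₀ < ⊤)
    (M : ℝ) (hM : 0 ≤ M)
    (hMbound : ∃ c : ℝ, 1 ≤ c ∧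
      (P₀ {x | (1 + 1 / (2 * c)) ^ 2 ≤ p₀ x / p x} = 0 ∨
        ENNReal.ofReal c *
            (∫⁻ x in {x | (1 + 1 / (2 * c)) ^ 2 ≤ p₀ x / p x},
              ENNReal.ofReal (p₀ x / p x) ∂P₀) ≤
          ENNReal.ofReal M * P₀ {x | (1 + 1 / (2 * c)) ^ 2 ≤ p₀ x / p x}))
    (k : ℝ) (hk : 2 ≤ k) :
    ∫⁻ x, ENNReal.ofReal (|Real.log (p x / p₀ x)| ^ k) ∂P₀ ≤
      ENNReal.ofReal ((2 : ℝ) ^ (k - 1) * Real.Gamma (k + 1) * (2 + M)) *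
        ∫⁻ x, ENNReal.ofReal ((Real.sqrt (p x) - Real.sqrt (p₀ x)) ^ 2) ∂μ := by
  exact lintegral_abs_log_ratio_rpow_le_hellinger_general μ p p₀ hp hp₀ hpnn hp₀nn P₀ hP₀ hzero M hM
    hMbound k hk
end

section
/- Let D : X → (0,1) be measurable, let δ ≥ 0 and M ≥ 0, and assume: P₀({p_θ = 0}) = 0; ∫ (p₀/p_θ) dP₀ ≤ M; ∫ (p₀/p_θ)² dP₀ ≤ M; ∫_{B} ((1−D_θ)/(1−D)) dP₀ ≤ M · P₀(B) where B := {(1−D_θ)/(1−D) ≥ 25/16}; h_θ(1−D, 1−D_θ)² ≤ δ²; and log((1−D)/(1−D_θ)) is P₀-integrable. Then |∫ log((1−D)/(1−D_θ)) dP₀| ≤ (√2 + 2 + 25M/e) · √(2M) · δ. -/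
open MeasureTheory Real ENNReal

/-!
Put `q = (1 - D) / (1 - D_θ)`. While `q⁻¹ ≤ r²`, `|log q| = 2 |log √q|` is at most `2r |√q - 1|`,
because `log` is `r`-Lipschitz on `[r⁻¹, ∞)`. On the tail `q⁻¹ ≥ r²` one has `|log q| ≤ q⁻¹ / e`,
whose integral is controlled by the measure of the tail, and there `|√q - 1| ≥ 1 - r⁻¹`, so by
Markov's inequality that measure is again controlled by `∫ |√q - 1| dP₀`. Since `D_θ` is the density
of `P₀` with respect to `P₀ + P_θ`, Cauchy–Schwarz bounds this last integral by
`h_θ(1 - D, 1 - D_θ) · (∫ p₀ / p_θ dP₀)^{1/2}`. The choice `r = 5/4` gives the constant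
`5/2 + 5M/e`.
-/

section PointwiseBounds

variable {q r s : ℝ}

lemma abs_log_le_mul_abs_sub_one (hr : 1 ≤ r) (hs : r⁻¹ ≤ s) :
    |Real.log s| ≤ r * |s - 1| := by
  have hs_pos : 0 < s := (inv_pos.2 (by linarith)).trans_le hs
  rcases le_total 1 s with h | h
  · rw [abs_of_nonneg (Real.log_nonneg h), abs_of_nonneg (sub_nonneg.2 h)]
    exact (Real.log_le_sub_one_of_pos hs_pos).trans
      (le_mul_of_one_le_left (sub_nonneg.2 h) hr)
  · rw [abs_of_nonpos (Real.log_nonpos hs_pos.le h), abs_of_nonpos (sub_nonpos.2 h), neg_sub]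
    calc -Real.log s ≤ s⁻¹ - 1 := by linarith [Real.one_sub_inv_le_log_of_pos hs_pos]
      _ = s⁻¹ * (1 - s) := by field_simp
      _ ≤ r * (1 - s) :=
        mul_le_mul_of_nonneg_right (inv_le_of_inv_le₀ (by linarith) hs) (sub_nonneg.2 h)

lemma abs_log_le_mul_abs_sqrt_sub_one (hr : 1 ≤ r) (hq : 0 < q) (hqr : q⁻¹ ≤ r ^ 2) :
    |Real.log q| ≤ 2 * r * |√q - 1| := by
  have hsqrt : r⁻¹ ≤ √q :=
    Real.le_sqrt_of_sq_le (by rw [inv_pow]; exact inv_le_of_inv_le₀ hq hqr)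
  calc |Real.log q| = 2 * |Real.log √q| := by
        rw [Real.log_sqrt hq.le, abs_div, abs_two, mul_div_cancel₀ _ two_ne_zero]
    _ ≤ 2 * (r * |√q - 1|) := by gcongr; exact abs_log_le_mul_abs_sub_one hr hsqrt
    _ = 2 * r * |√q - 1| := (mul_assoc ..).symm

lemma abs_log_le_inv_div_exp_one (hq : 0 < q) (hq_one : q ≤ 1) :
    |Real.log q| ≤ q⁻¹ / Real.exp 1 := by
  rw [abs_of_nonpos (Real.log_nonpos hq.le hq_one), ← Real.log_inv,
    le_div_iff₀' (Real.exp_pos 1)]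
  simpa only [Real.exp_log (inv_pos.2 hq)] using Real.exp_one_mul_le_exp (x := Real.log q⁻¹)

lemma one_sub_inv_le_abs_sqrt_sub_one (hr : 0 < r) (hqr : r ^ 2 ≤ q⁻¹) :
    1 - r⁻¹ ≤ |√q - 1| := by
  have hsqrt : √q ≤ r⁻¹ := by
    rw [Real.sqrt_le_left (by positivity), inv_pow]
    exact le_inv_of_le_inv₀ (by positivity) hqr
  linarith [neg_abs_le (√q - 1)]

end PointwiseBounds

section LogIntegral

variable {X : Type*} [MeasurableSpace X] {P : Measure X} {q : X → ℝ} {r : ℝ}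

lemma measure_sq_le_inv_le (hq : Measurable q) (hr : 1 < r) :
    P {x | r ^ 2 ≤ (q x)⁻¹} ≤ ENNReal.ofReal (1 - r⁻¹)⁻¹ * ∫⁻ x, ‖√(q x) - 1‖ₑ ∂P := by
  have hgap : 0 < 1 - r⁻¹ := sub_pos.2 (inv_lt_one_of_one_lt₀ hr)
  have hsubset : {x | r ^ 2 ≤ (q x)⁻¹} ⊆ {x | ENNReal.ofReal (1 - r⁻¹) ≤ ‖√(q x) - 1‖ₑ} := by
    intro x hx
    rw [Set.mem_ofPred_eq, Real.enorm_eq_ofReal_abs]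
    exact ENNReal.ofReal_le_ofReal (one_sub_inv_le_abs_sqrt_sub_one (by linarith) hx)
  calc P {x | r ^ 2 ≤ (q x)⁻¹}
      ≤ (∫⁻ x, ‖√(q x) - 1‖ₑ ∂P) / ENNReal.ofReal (1 - r⁻¹) :=
        (measure_mono hsubset).trans <| meas_ge_le_lintegral_div (by fun_prop)
          (ENNReal.ofReal_pos.2 hgap).ne' ENNReal.ofReal_ne_top
    _ = ENNReal.ofReal (1 - r⁻¹)⁻¹ * ∫⁻ x, ‖√(q x) - 1‖ₑ ∂P := by
        rw [ENNReal.div_eq_inv_mul, ENNReal.ofReal_inv_of_pos hgap]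

lemma setLIntegral_enorm_log_compl_le (hq : Measurable q) (hq_pos : ∀ᵐ x ∂P, 0 < q x)
    (hr : 1 ≤ r) :
    ∫⁻ x in {x | r ^ 2 ≤ (q x)⁻¹}ᶜ, ‖Real.log (q x)‖ₑ ∂P ≤
      ENNReal.ofReal (2 * r) * ∫⁻ x, ‖√(q x) - 1‖ₑ ∂P := by
  rw [← lintegral_const_mul _ (by fun_prop)]
  refine (setLIntegral_mono_ae (by fun_prop) ?_).trans (setLIntegral_le_lintegral _ _)
  filter_upwards [hq_pos] with x hx hx_compl
  rw [Real.enorm_eq_ofReal_abs, Real.enorm_eq_ofReal_abs, ← ENNReal.ofReal_mul (by linarith)]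
  exact ENNReal.ofReal_le_ofReal
    (abs_log_le_mul_abs_sqrt_sub_one hr hx (le_of_not_ge fun h => hx_compl h))

lemma setLIntegral_enorm_log_le (hq : Measurable q) (hr : 1 ≤ r) :
    ∫⁻ x in {x | r ^ 2 ≤ (q x)⁻¹}, ‖Real.log (q x)‖ₑ ∂P ≤
      ENNReal.ofReal (Real.exp 1)⁻¹ *
        ∫⁻ x in {x | r ^ 2 ≤ (q x)⁻¹}, ENNReal.ofReal (q x)⁻¹ ∂P := by
  rw [← lintegral_const_mul _ (by fun_prop)]
  refine setLIntegral_mono (by fun_prop) fun x hx => ?_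
  have hinv : 1 ≤ (q x)⁻¹ := (one_le_pow₀ hr).trans hx
  have hq_pos : 0 < q x := inv_pos.1 (one_pos.trans_le hinv)
  rw [Real.enorm_eq_ofReal_abs, ← ENNReal.ofReal_mul (by positivity), ← div_eq_inv_mul]
  exact ENNReal.ofReal_le_ofReal
    (abs_log_le_inv_div_exp_one hq_pos ((one_le_inv₀ hq_pos).1 hinv))

lemma lintegral_enorm_log_le_mul_lintegral_enorm_sqrt_sub_one {M : ℝ≥0∞} (hq : Measurable q)
    (hq_pos : ∀ᵐ x ∂P, 0 < q x) (hr : 1 < r)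
    (htail : ∫⁻ x in {x | r ^ 2 ≤ (q x)⁻¹}, ENNReal.ofReal (q x)⁻¹ ∂P ≤
      M * P {x | r ^ 2 ≤ (q x)⁻¹}) :
    ∫⁻ x, ‖Real.log (q x)‖ₑ ∂P ≤
      (ENNReal.ofReal (2 * r) +
        ENNReal.ofReal (Real.exp 1)⁻¹ * (M * ENNReal.ofReal (1 - r⁻¹)⁻¹)) *
          ∫⁻ x, ‖√(q x) - 1‖ₑ ∂P := by
  have hmeas : MeasurableSet {x | r ^ 2 ≤ (q x)⁻¹} :=
    measurableSet_le measurable_const hq.inv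
  rw [← lintegral_add_compl _ hmeas, add_comm, add_mul]
  refine add_le_add (setLIntegral_enorm_log_compl_le hq hq_pos hr.le)
    ((setLIntegral_enorm_log_le hq hr.le).trans ?_)
  rw [mul_assoc, mul_assoc]
  gcongr
  refine htail.trans ?_
  gcongr
  exact measure_sq_le_inv_le hq hr

end LogIntegral

section ChangeOfMeasure

variable {X : Type*} [MeasurableSpace X] {ν : Measure X}

lemma lintegral_mul_withDensity_le {f u v : X → ℝ≥0∞} (hf : Measurable f) (hu : Measurable u)
    (hv : Measurable v) :
    ∫⁻ x, u x * v x ∂ν.withDensity f ≤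
      (∫⁻ x, u x ^ 2 ∂ν) ^ (1 / 2 : ℝ) *
        (∫⁻ x, f x * v x ^ 2 ∂ν.withDensity f) ^ (1 / 2 : ℝ) := by
  rw [lintegral_withDensity_eq_lintegral_mul _ hf (by fun_prop),
    lintegral_withDensity_eq_lintegral_mul _ hf (by fun_prop)]
  calc ∫⁻ x, (f * fun x => u x * v x) x ∂ν
      = ∫⁻ x, (u * (f * v)) x ∂ν := by
        simp only [Pi.mul_apply, mul_left_comm]
    _ ≤ (∫⁻ x, u x ^ (2 : ℝ) ∂ν) ^ (1 / 2 : ℝ) *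
          (∫⁻ x, (f * v) x ^ (2 : ℝ) ∂ν) ^ (1 / 2 : ℝ) :=
        ENNReal.lintegral_mul_le_Lp_mul_Lq ν Real.HolderConjugate.two_two
          hu.aemeasurable (hf.mul hv).aemeasurable
    _ = _ := by
        simp only [ENNReal.rpow_two, Pi.mul_apply, mul_pow, sq (f _), mul_assoc]

lemma lintegral_enorm_sqrt_div_sub_one_withDensity_le {a d : X → ℝ} (ha : Measurable a)
    (hd : Measurable d) (hd_lt : ∀ᵐ x ∂ν.withDensity fun x => ENNReal.ofReal (d x), d x < 1) :
    ∫⁻ x, ‖√(a x / (1 - d x)) - 1‖ₑ ∂ν.withDensity (fun x => ENNReal.ofReal (d x)) ≤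
      (∫⁻ x, ENNReal.ofReal ((√(a x) - √(1 - d x)) ^ 2) ∂ν) ^ (1 / 2 : ℝ) *
        (∫⁻ x, ENNReal.ofReal (d x / (1 - d x))
          ∂ν.withDensity fun x => ENNReal.ofReal (d x)) ^ (1 / 2 : ℝ) := by
  set P := ν.withDensity fun x => ENNReal.ofReal (d x)
  have hfactor : ∀ᵐ x ∂P, ‖√(a x / (1 - d x)) - 1‖ₑ =
      ‖√(a x) - √(1 - d x)‖ₑ * ‖(√(1 - d x))⁻¹‖ₑ := by
    filter_upwards [hd_lt] with x hx
    have hsqrt_ne : √(1 - d x) ≠ 0 := (Real.sqrt_pos.2 (sub_pos.2 hx)).ne'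
    rw [← enorm_mul, Real.sqrt_div' _ (sub_pos.2 hx).le, ← div_eq_mul_inv, sub_div,
      div_self hsqrt_ne]
  have hodds : ∀ᵐ x ∂P, ENNReal.ofReal (d x) * ‖(√(1 - d x))⁻¹‖ₑ ^ 2 =
      ENNReal.ofReal (d x / (1 - d x)) := by
    filter_upwards [hd_lt] with x hx
    rw [← enorm_pow, inv_pow, Real.sq_sqrt (sub_pos.2 hx).le,
      Real.enorm_of_nonneg (inv_pos.2 (sub_pos.2 hx)).le,
      ← ENNReal.ofReal_mul' (inv_pos.2 (sub_pos.2 hx)).le, div_eq_mul_inv]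
  have hsq (x : X) : ENNReal.ofReal ((√(a x) - √(1 - d x)) ^ 2) =
      ‖√(a x) - √(1 - d x)‖ₑ ^ 2 := by
    rw [← enorm_pow, Real.enorm_of_nonneg (sq_nonneg _)]
  rw [lintegral_congr_ae hfactor, ← lintegral_congr_ae hodds]
  simp only [hsq]
  exact lintegral_mul_withDensity_le (by fun_prop) (by fun_prop) (by fun_prop)

end ChangeOfMeasure

/-- `d` is an oracle discriminator for the densities `p₀` and `p₁`: it equals `p₀ / (p₀ + p₁)`
wherever `p₀ + p₁` is positive, and is unconstrained elsewhere. -/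
def IsOracleDiscriminator {X : Type*} (p₀ p₁ d : X → ℝ) : Prop :=
  ∀ x, 0 < p₀ x + p₁ x → d x = p₀ x / (p₀ x + p₁ x)

namespace IsOracleDiscriminator

variable {X : Type*} {p₀ p₁ d : X → ℝ}

lemma add_mul_eq (hd : IsOracleDiscriminator p₀ p₁ d) {x : X} (hp₀ : 0 ≤ p₀ x) (hp₁ : 0 ≤ p₁ x) :
    (p₀ x + p₁ x) * d x = p₀ x := by
  rcases (add_nonneg hp₀ hp₁).eq_or_lt with h | h
  · rw [← h, zero_mul]
    linarith
  · rw [hd x h, mul_div_cancel₀ _ h.ne']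

lemma one_sub_eq (hd : IsOracleDiscriminator p₀ p₁ d) {x : X} (h : 0 < p₀ x + p₁ x) :
    1 - d x = p₁ x / (p₀ x + p₁ x) := by
  rw [hd x h, one_sub_div h.ne', add_sub_cancel_left]

lemma lt_one (hd : IsOracleDiscriminator p₀ p₁ d) {x : X} (hp₀ : 0 ≤ p₀ x) (hp₁ : 0 < p₁ x) :
    d x < 1 := by
  have hsum : 0 < p₀ x + p₁ x := by positivity
  rw [← sub_pos, hd.one_sub_eq hsum]
  positivity

lemma div_one_sub_eq (hd : IsOracleDiscriminator p₀ p₁ d) {x : X} (h : 0 < p₀ x + p₁ x) :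
    d x / (1 - d x) = p₀ x / p₁ x := by
  rw [hd.one_sub_eq h, hd x h, div_div_div_cancel_right₀ h.ne']

lemma withDensity_add_withDensity_eq [MeasurableSpace X] {μ : Measure X}
    (hd : IsOracleDiscriminator p₀ p₁ d) (hp₀ : Measurable p₀) (hp₁ : Measurable p₁)
    (hd_meas : Measurable d) (hp₀_nonneg : ∀ x, 0 ≤ p₀ x) (hp₁_nonneg : ∀ x, 0 ≤ p₁ x) :
    (μ.withDensity (fun x => ENNReal.ofReal (p₀ x)) +
      μ.withDensity fun x => ENNReal.ofReal (p₁ x)).withDensity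
        (fun x => ENNReal.ofReal (d x)) = μ.withDensity fun x => ENNReal.ofReal (p₀ x) := by
  rw [← withDensity_add_left (by fun_prop), ← withDensity_mul _ (by fun_prop) (by fun_prop)]
  congr with x
  rw [Pi.mul_apply, Pi.add_apply, ← ENNReal.ofReal_add (hp₀_nonneg x) (hp₁_nonneg x),
    ← ENNReal.ofReal_mul (add_nonneg (hp₀_nonneg x) (hp₁_nonneg x)),
    hd.add_mul_eq (hp₀_nonneg x) (hp₁_nonneg x)]

lemma lintegral_enorm_sqrt_div_sub_one_le [MeasurableSpace X] {μ P₀ P₁ : Measure X} {a : X → ℝ}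
    (hd : IsOracleDiscriminator p₀ p₁ d) (hp₀ : Measurable p₀) (hp₁ : Measurable p₁)
    (hd_meas : Measurable d) (hp₀_nonneg : ∀ x, 0 ≤ p₀ x) (hp₁_nonneg : ∀ x, 0 ≤ p₁ x)
    (hP₀ : P₀ = μ.withDensity fun x => ENNReal.ofReal (p₀ x))
    (hP₁ : P₁ = μ.withDensity fun x => ENNReal.ofReal (p₁ x))
    (hp₁_pos : ∀ᵐ x ∂P₀, 0 < p₁ x) (ha : Measurable a) :
    ∫⁻ x, ‖√(a x / (1 - d x)) - 1‖ₑ ∂P₀ ≤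
      (∫⁻ x, ENNReal.ofReal ((√(a x) - √(1 - d x)) ^ 2) ∂(P₀ + P₁)) ^ (1 / 2 : ℝ) *
        (∫⁻ x, ENNReal.ofReal (p₀ x / p₁ x) ∂P₀) ^ (1 / 2 : ℝ) := by
  have hdensity : (P₀ + P₁).withDensity (fun x => ENNReal.ofReal (d x)) = P₀ := by
    rw [hP₀, hP₁]
    exact hd.withDensity_add_withDensity_eq hp₀ hp₁ hd_meas hp₀_nonneg hp₁_nonneg
  have hodds : ∀ᵐ x ∂P₀, ENNReal.ofReal (d x / (1 - d x)) = ENNReal.ofReal (p₀ x / p₁ x) := by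
    filter_upwards [hp₁_pos] with x hx
    rw [hd.div_one_sub_eq (add_pos_of_nonneg_of_pos (hp₀_nonneg x) hx)]
  have hd_lt : ∀ᵐ x ∂P₀, d x < 1 := hp₁_pos.mono fun x => hd.lt_one (hp₀_nonneg x)
  have hcauchy := lintegral_enorm_sqrt_div_sub_one_withDensity_le (ν := P₀ + P₁) ha hd_meas
    (by rwa [hdensity])
  rwa [hdensity, lintegral_congr_ae hodds] at hcauchy

end IsOracleDiscriminator

lemma rpow_half_mul_rpow_half_le_ofReal {A B : ℝ≥0∞} {δ M : ℝ} (hδ : 0 ≤ δ)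
    (hM : 0 ≤ M) (hA : A ≤ ENNReal.ofReal (δ ^ 2)) (hB : B ≤ ENNReal.ofReal M) :
    A ^ (1 / 2 : ℝ) * B ^ (1 / 2 : ℝ) ≤ ENNReal.ofReal (√M * δ) := by
  calc A ^ (1 / 2 : ℝ) * B ^ (1 / 2 : ℝ)
      ≤ ENNReal.ofReal (δ ^ 2) ^ (1 / 2 : ℝ) * ENNReal.ofReal M ^ (1 / 2 : ℝ) := by gcongr
    _ = ENNReal.ofReal (√M * δ) := by
      rw [ENNReal.ofReal_rpow_of_nonneg (sq_nonneg δ) one_half_pos.le,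
        ENNReal.ofReal_rpow_of_nonneg hM one_half_pos.le, ← Real.sqrt_eq_rpow,
        ← Real.sqrt_eq_rpow, Real.sqrt_sq hδ, mul_comm, ENNReal.ofReal_mul (Real.sqrt_nonneg M)]

theorem abs_integral_log_one_sub_ratio_discriminator_le_general
    {X : Type*} [MeasurableSpace X] {μ : Measure X} {p₀ pθ : X → ℝ}
    (hp₀ : Measurable p₀) (hpθ : Measurable pθ)
    (hp₀nn : ∀ x, 0 ≤ p₀ x) (hpθnn : ∀ x, 0 ≤ pθ x) {P₀ Pθ : Measure X}
    (hP₀ : P₀ = μ.withDensity fun x => ENNReal.ofReal (p₀ x))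
    (hPθ : Pθ = μ.withDensity fun x => ENNReal.ofReal (pθ x))
    {Dθ : X → ℝ} (hDθ : Measurable Dθ) (hDθ_oracle : IsOracleDiscriminator p₀ pθ Dθ)
    {D : X → ℝ} (hD : Measurable D) (hD_lt : ∀ x, D x < 1)
    {δ M : ℝ} (hδ : 0 ≤ δ) (hM : 0 ≤ M) (hpθzero : P₀ {x | pθ x = 0} = 0)
    (hratio : ∫⁻ x, ENNReal.ofReal (p₀ x / pθ x) ∂P₀ ≤ ENNReal.ofReal M)
    (htail :
      (∫⁻ x in {x | 25 / 16 ≤ (1 - Dθ x) / (1 - D x)},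
          ENNReal.ofReal ((1 - Dθ x) / (1 - D x)) ∂P₀) ≤
        ENNReal.ofReal M * P₀ {x | 25 / 16 ≤ (1 - Dθ x) / (1 - D x)})
    (hhel : ∫⁻ x, ENNReal.ofReal ((√(1 - D x) - √(1 - Dθ x)) ^ 2) ∂(P₀ + Pθ) ≤
      ENNReal.ofReal (δ ^ 2)) :
    Integrable (fun x => Real.log ((1 - D x) / (1 - Dθ x))) P₀ ∧
      ∫ x, |Real.log ((1 - D x) / (1 - Dθ x))| ∂P₀ ≤
        (5 / 2 + 5 * M / Real.exp 1) * √M * δ := by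
  have hpθ_pos : ∀ᵐ x ∂P₀, 0 < pθ x :=
    (measure_eq_zero_iff_ae_notMem.1 hpθzero).mono fun x hx => (hpθnn x).lt_of_ne' hx
  have hq_pos : ∀ᵐ x ∂P₀, 0 < (1 - D x) / (1 - Dθ x) := hpθ_pos.mono fun x hx =>
    div_pos (sub_pos.2 (hD_lt x)) (sub_pos.2 (hDθ_oracle.lt_one (hp₀nn x) hx))
  have hsqrt : ∫⁻ x, ‖√((1 - D x) / (1 - Dθ x)) - 1‖ₑ ∂P₀ ≤ ENNReal.ofReal (√M * δ) :=
    (hDθ_oracle.lintegral_enorm_sqrt_div_sub_one_le hp₀ hpθ hDθ hp₀nn hpθnn hP₀ hPθ hpθ_pos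
      (by fun_prop)).trans (rpow_half_mul_rpow_half_le_ofReal hδ hM hhel hratio)
  have hlog : ∫⁻ x, ‖Real.log ((1 - D x) / (1 - Dθ x))‖ₑ ∂P₀ ≤
      ENNReal.ofReal ((5 / 2 + 5 * M / Real.exp 1) * √M * δ) := by
    have hlog_le := lintegral_enorm_log_le_mul_lintegral_enorm_sqrt_sub_one (r := 5 / 4)
      (M := ENNReal.ofReal M) (by fun_prop) hq_pos (by norm_num)
      (by norm_num only [inv_div]; exact htail)
    refine hlog_le.trans ((mul_le_mul_right hsqrt _).trans_eq ?_)
    rw [← ENNReal.ofReal_mul hM, ← ENNReal.ofReal_mul (by positivity),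
      ← ENNReal.ofReal_add (by norm_num) (by norm_num; positivity),
      ← ENNReal.ofReal_mul (by norm_num; positivity)]
    congr 1
    ring
  refine ⟨⟨(by fun_prop : Measurable _).aestronglyMeasurable,
    hlog.trans_lt ENNReal.ofReal_lt_top⟩, ?_⟩
  simp only [← Real.norm_eq_abs]
  rw [integral_norm_eq_lintegral_enorm (by fun_prop : Measurable _).aestronglyMeasurable]
  exact ENNReal.toReal_le_of_le_ofReal (by positivity) hlog

lemma five_halves_add_mul_sqrt_le {M : ℝ} (hM : 0 ≤ M) :
    (5 / 2 + 5 * M / Real.exp 1) * √M ≤ (√2 + 2 + 25 * M / Real.exp 1) * √(2 * M) := by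
  have hsqrt_two : 1 ≤ √2 := Real.one_le_sqrt.2 one_le_two
  have hconst : 5 / 2 + 5 * M / Real.exp 1 ≤ √2 + 2 + 25 * M / Real.exp 1 := by
    gcongr <;> linarith
  gcongr
  linarith

/-- Under the stated conditions,
`|∫ log((1-D)/(1-D_θ)) dP₀| ≤ (√2 + 2 + 25M/e) √(2M) δ`. -/
theorem abs_integral_log_one_sub_ratio_discriminator_le
    {X : Type*} [MeasurableSpace X] (μ : Measure X) [SigmaFinite μ]
    (p₀ pθ : X → ℝ) (hp₀ : Measurable p₀) (hpθ : Measurable pθ)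
    (hp₀nn : ∀ x, 0 ≤ p₀ x) (hpθnn : ∀ x, 0 ≤ pθ x)
    (hp₀den : ∫⁻ x, ENNReal.ofReal (p₀ x) ∂μ = 1)
    (hpθden : ∫⁻ x, ENNReal.ofReal (pθ x) ∂μ = 1)
    (P₀ Pθ : Measure X)
    (hP₀ : P₀ = μ.withDensity fun x => ENNReal.ofReal (p₀ x))
    (hPθ : Pθ = μ.withDensity fun x => ENNReal.ofReal (pθ x))
    (Dθ : X → ℝ) (hDθ : Measurable Dθ)
    (hDθ_def : ∀ x, 0 < p₀ x + pθ x → Dθ x = p₀ x / (p₀ x + pθ x))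
    (D : X → ℝ) (hD : Measurable D) (hD_mem : ∀ x, 0 < D x ∧ D x < 1)
    (δ M : ℝ) (hδ : 0 ≤ δ) (hM : 0 ≤ M)
    (hpθzero : P₀ {x | pθ x = 0} = 0)
    (hratio1 : ∫⁻ x, ENNReal.ofReal (p₀ x / pθ x) ∂P₀ ≤ ENNReal.ofReal M)
    (hratio2 : ∫⁻ x, ENNReal.ofReal ((p₀ x / pθ x) ^ 2) ∂P₀ ≤ ENNReal.ofReal M)
    (htail :
      (∫⁻ x in {x | 25 / 16 ≤ (1 - Dθ x) / (1 - D x)},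
          ENNReal.ofReal ((1 - Dθ x) / (1 - D x)) ∂P₀) ≤
        ENNReal.ofReal M * P₀ {x | 25 / 16 ≤ (1 - Dθ x) / (1 - D x)})
    (hhel : ∫⁻ x, ENNReal.ofReal
          ((Real.sqrt (1 - D x) - Real.sqrt (1 - Dθ x)) ^ 2) ∂(P₀ + Pθ) ≤
      ENNReal.ofReal (δ ^ 2))
    (hint : Integrable (fun x => Real.log ((1 - D x) / (1 - Dθ x))) P₀) :
    |∫ x, Real.log ((1 - D x) / (1 - Dθ x)) ∂P₀| ≤
      (Real.sqrt 2 + 2 + 25 * M / Real.exp 1) * Real.sqrt (2 * M) * δ := by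
  exact (abs_integral_le_integral_abs.trans (abs_integral_log_one_sub_ratio_discriminator_le_general
    hp₀ hpθ hp₀nn hpθnn hP₀ hPθ hDθ hDθ_def hD (fun x => (hD_mem x).2) hδ hM hpθzero hratio1 htail
    hhel).2).trans (mul_le_mul_of_nonneg_right (five_halves_add_mul_sqrt_le hM) hδ)
end
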